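/- Let B ≥ 1 and λ ∈ ℝ with 0 < λ ≤ 1, and let Λ be the (B+1)×(B+1) matrix defined in the context. Then the powers of Λ converge entrywise to the matrix whose last row consists of all ones and whose other entries are all zero: for all l ∈ {0,…,B}, lim_{m→∞} (Λ^m)_{j,l} = 0 for every j < B, and lim_{m→∞} (Λ^m)_{B,l} = 1. -/

import Mathlib

open Matrix Filter

/-- The `(B+1) × (B+1)` transition matrix `Λ`: diagonal entries `1 - λ` (except the
last one, which is `1`), subdiagonal entries `λ`, all other entries `0`. -/
def Lam (B : ℕ) (lam : ℝ) : Matrix (Fin (B+1)) (Fin (B+1)) ℝ :=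
  Matrix.of fun j l =>
    if (j : ℕ) = (l : ℕ) then (if (j : ℕ) < B then 1 - lam else 1)
    else if (j : ℕ) = (l : ℕ) + 1 then lam
    else 0

/-!
`Λ` is lower triangular, so row `j < B` of `Λ ^ (m + 1) = Λ * Λ ^ m` is `1 - λ` times row `j` of
`Λ ^ m` plus a combination of the earlier rows. By induction on `j` that combination tends to `0`,
and a contraction with vanishing perturbation tends to `0`. The columns of `Λ`, hence of its
powers, sum to `1`, so the entries of the last row tend to `1`.
-/

open Topology

theorem tendsto_zero_of_le_mul_add {u b : ℕ → ℝ} {r : ℝ} (hr₀ : 0 ≤ r) (hr₁ : r < 1)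
    (hu : ∀ n, 0 ≤ u n) (hub : ∀ n, u (n + 1) ≤ r * u n + b n) (hb : Tendsto b atTop (𝓝 0)) :
    Tendsto u atTop (𝓝 0) := by
  refine tendsto_order.2 ⟨fun a ha => .of_forall fun n => ha.trans_le (hu n), fun ε hε => ?_⟩
  obtain ⟨N, hN⟩ : ∃ N, ∀ n ≥ N, b n < (1 - r) * (ε / 2) :=
    eventually_atTop.1 (hb.eventually_lt_const (mul_pos (sub_pos.2 hr₁) (half_pos hε)))
  -- `ε / 2` is the fixed point of `x ↦ r * x + (1 - r) * (ε / 2)`.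
  have excess_le (k : ℕ) : u (k + N) - ε / 2 ≤ r ^ k * (u N - ε / 2) := by
    simpa using le_geom (u := fun k => u (k + N) - ε / 2) hr₀ k fun i _ => by
      rw [Nat.add_right_comm]
      linarith [hub (i + N), hN (i + N) (Nat.le_add_left N i)]
  have excess_bound_tendsto : Tendsto (fun k => r ^ k * (u N - ε / 2)) atTop (𝓝 0) := by
    simpa using (tendsto_pow_atTop_nhds_zero_of_lt_one hr₀ hr₁).mul_const (u N - ε / 2)
  rw [← map_add_atTop_eq_nat N, eventually_map]
  filter_upwards [excess_bound_tendsto.eventually_lt_const (half_pos hε)] with k hk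
  linarith [excess_le k]

theorem tendsto_pow_apply_of_blockTriangular_toDual {n R : Type*} [Fintype n] [LinearOrder n]
    [SeminormedRing R] {A : Matrix n n R} (hA : A.BlockTriangular OrderDual.toDual) (j l : n)
    (hdiag : ∀ i ≤ j, ‖A i i‖ < 1) : Tendsto (fun m : ℕ => (A ^ m) j l) atTop (𝓝 0) := by
  induction j using WellFoundedLT.induction with
  | ind j ih =>
  let b (m : ℕ) : R := ∑ i ∈ Finset.univ.erase j, A j i * (A ^ m) i l
  have recurrence (m : ℕ) : (A ^ (m + 1)) j l = A j j * (A ^ m) j l + b m := by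
    rw [pow_succ', mul_apply]
    exact (Finset.add_sum_erase _ (fun i => A j i * (A ^ m) i l) (Finset.mem_univ j)).symm
  have tendsto_b : Tendsto b atTop (𝓝 0) := by
    rw [← Finset.sum_const_zero (s := Finset.univ.erase j)]
    refine tendsto_finsetSum _ fun i hi => ?_
    rcases (Finset.ne_of_mem_erase hi).lt_or_gt with hij | hji
    · simpa using (ih i hij fun k hk => hdiag k (hk.trans hij.le)).const_mul (A j i)
    · simp [hA (OrderDual.toDual_lt_toDual.2 hji), tendsto_const_nhds]
  refine tendsto_zero_iff_norm_tendsto_zero.2 <|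
    tendsto_zero_of_le_mul_add (norm_nonneg _) (hdiag j le_rfl) (fun _ => norm_nonneg _)
      (fun m => ?_) (by simpa using tendsto_b.norm)
  calc ‖(A ^ (m + 1)) j l‖ = ‖A j j * (A ^ m) j l + b m‖ := by rw [recurrence]
    _ ≤ ‖A j j‖ * ‖(A ^ m) j l‖ + ‖b m‖ := norm_add_le_of_le (norm_mul_le _ _) le_rfl

theorem vecMul_pow_eq_self {n R : Type*} [Fintype n] [DecidableEq n] [Semiring R]
    {A : Matrix n n R} {v : n → R} (h : v ᵥ* A = v) (m : ℕ) : v ᵥ* A ^ m = v := by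
  induction m with
  | zero => simp
  | succ m ih => rw [pow_succ', ← vecMul_vecMul, h, ih]

theorem tendsto_of_sum_eq_of_tendsto_zero {α ι M : Type*} [Fintype ι] [AddCommGroup M]
    [TopologicalSpace M] [IsTopologicalAddGroup M] {f : α → ι → M} {F : Filter α}
    {c : M} {i₀ : ι} (hsum : ∀ a, ∑ i, f a i = c)
    (hf : ∀ i ≠ i₀, Tendsto (f · i) F (𝓝 0)) : Tendsto (f · i₀) F (𝓝 c) := by
  classical
  have rest_tendsto : Tendsto (fun a => ∑ i ∈ Finset.univ.erase i₀, f a i) F (𝓝 0) := by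
    rw [← Finset.sum_const_zero (s := Finset.univ.erase i₀)]
    exact tendsto_finsetSum _ fun i hi => hf i (Finset.ne_of_mem_erase hi)
  have eq_sub (a : α) : c - ∑ i ∈ Finset.univ.erase i₀, f a i = f a i₀ := by
    rw [← hsum a, ← Finset.add_sum_erase _ _ (Finset.mem_univ i₀), add_sub_cancel_right]
  simpa only [eq_sub, sub_zero] using rest_tendsto.const_sub c

theorem Lam_blockTriangular (B : ℕ) (lam : ℝ) :
    (Lam B lam).BlockTriangular OrderDual.toDual := by
  intro j l hjl
  have j_lt_l : (j : ℕ) < l := hjl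
  rw [Lam, of_apply, if_neg (by omega), if_neg (by omega)]

theorem Lam_apply_self_of_lt {B : ℕ} {j : Fin (B + 1)} (hj : (j : ℕ) < B) (lam : ℝ) :
    Lam B lam j j = 1 - lam := by
  simp [Lam, hj]

theorem one_vecMul_Lam (B : ℕ) (lam : ℝ) : 1 ᵥ* Lam B lam = 1 := by
  ext l
  simp only [vecMul, dotProduct, Pi.one_apply, one_mul]
  cases l using Fin.lastCases with
  | last =>
    rw [Fintype.sum_eq_single (Fin.last B) fun j hj => ?_]
    · simp [Lam]
    · rw [Lam, of_apply, if_neg (Fin.val_ne_of_ne hj), if_neg (by rw [Fin.val_last]; omega)]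
  | cast i =>
    rw [Fintype.sum_eq_add i.castSucc i.succ Fin.castSucc_lt_succ.ne fun j hj => ?_]
    · simp [Lam]
    · have j_ne_succ : (j : ℕ) ≠ i.castSucc + 1 := Fin.val_ne_of_ne hj.2
      rw [Lam, of_apply, if_neg (Fin.val_ne_of_ne hj.1), if_neg j_ne_succ]

theorem Lam_pow_tendsto_general (B : ℕ) (lam : ℝ) (h0 : 0 < lam) (h2 : lam < 2)
    (l : Fin (B + 1)) :
    (∀ j : Fin (B + 1), (j : ℕ) < B →
      Tendsto (fun m : ℕ => (Lam B lam ^ m) j l) atTop (𝓝 0)) ∧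
    Tendsto (fun m : ℕ => (Lam B lam ^ m) (Fin.last B) l) atTop (𝓝 1) := by
  have norm_lt : ‖1 - lam‖ < 1 := abs_lt.2 ⟨by linarith, by linarith⟩
  have tendsto_zero (j : Fin (B + 1)) (hj : (j : ℕ) < B) :
      Tendsto (fun m : ℕ => (Lam B lam ^ m) j l) atTop (𝓝 0) :=
    tendsto_pow_apply_of_blockTriangular_toDual (Lam_blockTriangular B lam) j l fun i hij => by
      rwa [Lam_apply_self_of_lt (lt_of_le_of_lt hij hj)]
  have sum_eq_one (m : ℕ) : ∑ j, (Lam B lam ^ m) j l = 1 := by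
    simpa [vecMul, dotProduct] using congrFun (vecMul_pow_eq_self (one_vecMul_Lam B lam) m) l
  exact ⟨tendsto_zero, tendsto_of_sum_eq_of_tendsto_zero (f := fun m j => (Lam B lam ^ m) j l)
    sum_eq_one fun j hj => tendsto_zero j (Fin.val_lt_last hj)⟩

/-- For 0 < λ ≤ 1, the powers of Λ converge entrywise to the matrix with all-ones
last row and zeros elsewhere. -/
theorem Lam_pow_tendsto (B : ℕ) (hB : 1 ≤ B) (lam : ℝ)
    (h0 : 0 < lam) (h1 : lam ≤ 1) (l : Fin (B+1)) :
    (∀ j : Fin (B+1), (j : ℕ) < B →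
      Filter.Tendsto (fun m : ℕ => (Lam B lam ^ m) j l) Filter.atTop (nhds 0)) ∧
    Filter.Tendsto (fun m : ℕ => (Lam B lam ^ m) (Fin.last B) l)
      Filter.atTop (nhds 1) := by
  exact Lam_pow_tendsto_general B lam h0 (by linarith) l
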